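/- arXiv:1508.05974 — 3 statements merged into one kernel-verified Lean document; each statement's English description precedes it below -/
import Mathlib

section
/- Let 𝔐 = K_X +^μ 𝔙, let H be a hyperplane of 𝔐, set H₀ = H ∩ V, and define the relation ∼ on X by: x ∼ y iff x = y, or x ≠ y and μ({x,y}) ∈ H₀. If 𝔞 and 𝔟 are two distinct equivalence classes of ∼, then exactly one of the inclusions 𝔞 ⊆ H, 𝔟 ⊆ H holds. -/
/-! Lines of `K_X +^μ 𝔙` have three points, so a subspace that meets every line contains
exactly one or all three points of each line. Applied to a line `{a, b, μ {a, b}}`, this says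
that `μ {a, b} ∈ H` holds precisely when `a` and `b` are on the same side of `H`
(`mu_mem_hyperplane_iff`). Hence `a ∼ b` means `a ∈ H ↔ b ∈ H` (`simRel_iff_mem_iff_mem`), the
only possible classes are `X ∩ H` and `X \ H`, and of two distinct classes exactly one lies
in `H`. -/

/-- An incidence structure: a set of points and a family of lines (subsets of points). -/
structure IncStruct (α : Type*) where
  pts : Set α
  lines : Set (Set α)

/-- A partial Steiner triple system: finitely many points, every line is a 3-element
subset of the point set, and two distinct points lie on at most one common line. -/
def IsPSTS {α : Type*} (M : IncStruct α) : Prop :=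
  M.pts.Finite ∧
  (∀ L ∈ M.lines, L ⊆ M.pts ∧ L.ncard = 3) ∧
  (∀ L₁ ∈ M.lines, ∀ L₂ ∈ M.lines, ∀ x y : α,
    x ≠ y → x ∈ L₁ → y ∈ L₁ → x ∈ L₂ → y ∈ L₂ → L₁ = L₂)

/-- A subspace: every line having two distinct points in `Y` is contained in `Y`. -/
def IsSubspace {α : Type*} (M : IncStruct α) (Y : Set α) : Prop :=
  Y ⊆ M.pts ∧ ∀ L ∈ M.lines, ∀ x ∈ L ∩ Y, ∀ y ∈ L ∩ Y, x ≠ y → L ⊆ Y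

/-- A hyperplane: a proper subspace meeting every line. -/
def IsHyperplane {α : Type*} (M : IncStruct α) (Y : Set α) : Prop :=
  IsSubspace M Y ∧ Y ≠ M.pts ∧ ∀ L ∈ M.lines, (L ∩ Y).Nonempty

/-- `Y₁ ⋔ Y₂` relative to the ambient set `S`. -/
def hcap {α : Type*} (S Y₁ Y₂ : Set α) : Set α :=
  (Y₁ ∩ Y₂) ∪ ((S \ Y₁) ∩ (S \ Y₂))

/-- `℘₂(Z)`: the family of 2-element subsets of `Z`. -/
def pairs {α : Type*} (Z : Set α) : Set (Set α) :=
  {e | e ⊆ Z ∧ e.ncard = 2}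

/-- `H(A | B) = ℘₂(A) ∪ ℘₂(B)`. -/
def Hgt {α : Type*} (A B : Set α) : Set (Set α) := pairs A ∪ pairs B

/-- A `B(N)`-configuration (`N = n + c`): a PSTS with `C(N,2)` points, `C(N,3)` lines,
and each point on exactly `N - 2` lines. -/
def IsBConfig {α : Type*} (M : IncStruct α) (N : ℕ) : Prop :=
  IsPSTS M ∧ M.pts.ncard = N.choose 2 ∧ M.lines.ncard = N.choose 3 ∧
  ∀ p ∈ M.pts, {L | L ∈ M.lines ∧ p ∈ L}.ncard = N - 2

/-- `M` freely contains the complete graph `K_X`. -/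
def FreelyContains {α : Type*} (M : IncStruct α) (X : Set α) : Prop :=
  X ⊆ M.pts ∧
  (∀ x ∈ X, ∀ y ∈ X, x ≠ y → ∃ L ∈ M.lines, x ∈ L ∧ y ∈ L) ∧
  (∀ L ∈ M.lines, ∀ x ∈ L ∩ X, ∀ y ∈ L ∩ X, ∀ z ∈ L ∩ X, x = y ∨ y = z ∨ x = z) ∧
  (∀ L₁ ∈ M.lines, ∀ L₂ ∈ M.lines, ∀ a₁ ∈ X, ∀ a₂ ∈ X, ∀ b₁ ∈ X, ∀ b₂ ∈ X,
    a₁ ≠ a₂ → b₁ ≠ b₂ → ({a₁, a₂} : Set α) ∩ {b₁, b₂} = ∅ →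
    a₁ ∈ L₁ → a₂ ∈ L₁ → b₁ ∈ L₂ → b₂ ∈ L₂ → L₁ ∩ L₂ = ∅)

/-- Restriction of an incidence structure to a set `D` of points. -/
def restr {α : Type*} (M : IncStruct α) (D : Set α) : IncStruct α :=
  ⟨D, {L | L ∈ M.lines ∧ L ⊆ D}⟩

/-- Isomorphism of incidence structures: a bijection between the point sets
mapping the lines of one structure exactly onto the lines of the other. -/
def IsIso {α β : Type*} (M : IncStruct α) (N : IncStruct β) : Prop :=
  ∃ φ : α → β, Set.BijOn φ M.pts N.pts ∧ (fun L => φ '' L) '' M.lines = N.lines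

/-- The generalized Desargues configuration `G(X,2)`. -/
def Gdes {α : Type*} (X : Set α) : IncStruct (Set α) :=
  ⟨pairs X, {L | ∃ Z ⊆ X, Z.ncard = 3 ∧ L = pairs Z}⟩

/-- The configuration `K_X +^μ 𝔙`: point set `X ∪ V`, lines those of `𝔙` together with
the sets `{x, y, μ({x,y})}` for 2-subsets `{x,y}` of `X`. -/
def KPlus {α : Type*} (X V : Set α) (G : Set (Set α)) (μ : Set α → α) :
    IncStruct α :=
  ⟨X ∪ V, G ∪ {L | ∃ x ∈ X, ∃ y ∈ X, x ≠ y ∧ L = {x, y, μ {x, y}}}⟩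

/-- The relation `∼` on `X`: `x ∼ y` iff `x = y`, or `x ≠ y` and `μ({x,y}) ∈ H₀`. -/
def simRel {α : Type*} (μ : Set α → α) (H₀ : Set α) (x y : α) : Prop :=
  x = y ∨ (x ≠ y ∧ μ {x, y} ∈ H₀)

/-- The point `μ {a, b}` completing the line through `a, b ∈ X` lies in `H` iff `a` and `b`
are on the same side of `H`. -/
theorem mu_mem_hyperplane_iff {α : Type*} {X V : Set α} {G : Set (Set α)} {μ : Set α → α}
    {H : Set α} (hdisj : X ∩ V = ∅) (hμ : Set.MapsTo μ (pairs X) V)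
    (hH : IsHyperplane (KPlus X V G μ) H) {a b : α} (ha : a ∈ X) (hb : b ∈ X) (hab : a ≠ b) :
    μ {a, b} ∈ V ∧ (μ {a, b} ∈ H ↔ (a ∈ H ↔ b ∈ H)) := by
  have hm : μ {a, b} ∈ V :=
    hμ ⟨Set.insert_subset ha (Set.singleton_subset_iff.2 hb), Set.ncard_pair hab⟩
  have hne : ∀ c ∈ X, c ≠ μ {a, b} := by
    rintro c hc rfl
    exact (Set.eq_empty_iff_forall_notMem.1 hdisj _) ⟨hc, hm⟩
  have hL : ({a, b, μ {a, b}} : Set α) ∈ (KPlus X V G μ).lines :=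
    Or.inr ⟨a, ha, b, hb, hab, rfl⟩
  obtain ⟨⟨-, hsub⟩, -, hmeet⟩ := hH
  have hs := hsub _ hL
  obtain ⟨z, hz, hzH⟩ := hmeet _ hL
  have ham := hne a ha
  have hbm := hne b hb
  generalize μ {a, b} = m at *
  have h1 : a ∈ H → b ∈ H → m ∈ H := fun h h' =>
    hs a ⟨by simp, h⟩ b ⟨by simp, h'⟩ hab (by simp)
  have h2 : a ∈ H → m ∈ H → b ∈ H := fun h h' =>
    hs a ⟨by simp, h⟩ m ⟨by simp, h'⟩ ham (by simp)
  have h3 : b ∈ H → m ∈ H → a ∈ H := fun h h' =>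
    hs b ⟨by simp, h⟩ m ⟨by simp, h'⟩ hbm (by simp)
  have h4 : a ∈ H ∨ b ∈ H ∨ m ∈ H := by
    rcases hz with rfl | rfl | rfl <;> simp [hzH]
  exact ⟨hm, by tauto⟩

theorem simRel_iff_mem_iff_mem {α : Type*} {X V : Set α} {G : Set (Set α)} {μ : Set α → α}
    {H : Set α} (hdisj : X ∩ V = ∅) (hμ : Set.MapsTo μ (pairs X) V)
    (hH : IsHyperplane (KPlus X V G μ) H) {a b : α} (ha : a ∈ X) (hb : b ∈ X) :
    simRel μ (H ∩ V) a b ↔ (a ∈ H ↔ b ∈ H) := by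
  unfold simRel
  by_cases hab : a = b
  · simp [hab]
  · obtain ⟨hm, hiff⟩ := mu_mem_hyperplane_iff hdisj hμ hH ha hb hab
    simp [hab, hm, hiff]

/-- For a hyperplane `H` of `𝔐 = K_X +^μ 𝔙`, if `𝔞, 𝔟` are two distinct
equivalence classes of `∼`, then exactly one of `𝔞 ⊆ H`, `𝔟 ⊆ H` holds. -/
theorem stmt_7 {α : Type*} (n : ℕ) (hn : 4 ≤ n) (X V : Set α) (G : Set (Set α))
    (hdisj : X ∩ V = ∅) (hXcard : X.ncard = n)
    (hV : IsBConfig (IncStruct.mk V G) n)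
    (μ : Set α → α) (hμ : Set.BijOn μ (pairs X) V)
    (H : Set α) (hH : IsHyperplane (KPlus X V G μ) H)
    (x y : α) (hx : x ∈ X) (hy : y ∈ X)
    (hcl : {u | u ∈ X ∧ simRel μ (H ∩ V) x u} ≠ {u | u ∈ X ∧ simRel μ (H ∩ V) y u}) :
    Xor' ({u | u ∈ X ∧ simRel μ (H ∩ V) x u} ⊆ H)
         ({u | u ∈ X ∧ simRel μ (H ∩ V) y u} ⊆ H) := by
  have key : ∀ a ∈ X, {u | u ∈ X ∧ simRel μ (H ∩ V) a u} = {u | u ∈ X ∧ (a ∈ H ↔ u ∈ H)} := by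
    intro a ha
    ext u
    exact and_congr_right fun hu => simRel_iff_mem_iff_mem hdisj hμ.mapsTo hH ha hu
  have hsub : ∀ a ∈ X, {u | u ∈ X ∧ (a ∈ H ↔ u ∈ H)} ⊆ H ↔ a ∈ H := fun a ha =>
    ⟨fun h => h ⟨ha, Iff.rfl⟩, fun h u hu => hu.2.1 h⟩
  rw [key x hx, key y hy] at hcl ⊢
  rw [hsub x hx, hsub y hy]
  refine (xor_iff_not_iff _ _).2 ?_
  intro hxy
  exact hcl (by simp only [hxy])
end

section
/- Let 𝔐 = m ⋈^μ_ξ 𝔅 be a system of perspectives, suppose that the sets X_i = {q ∈ ℘₂(W) : i ∈ q}, i ∈ I, are the only subsets on which 𝔐 freely contains a complete K_n-graph, and let A be a nonempty proper subset of X. Then H(A | W \ A) is a hyperplane of 𝔐 if and only if the following three conditions hold: (i) H(A | X \ A) = ℘₂(A) ∪ ℘₂(X \ A) is a hyperplane of 𝔅; (ii) ξ_{i,j}(A) = A for all i, j ∈ I; (iii) for every i ∈ I and all {x,y}, {u,v} ∈ ℘₂(X) with μ_i({x,y}) = {u,v}, one has ({x,y} ⊆ A or {x,y} ⊆ X \ A)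 if and only if ({u,v} ⊆ A or {u,v} ⊆ X \ A). -/
/-- The lines of the system of perspectives `m ⋈^μ_ξ 𝔅`. -/
def perspLines {β : Type*} (X I : Set β) (G : Set (Set (Set β)))
    (μ : β → Set β → Set β) (ξ : β → β → β → β) : Set (Set (Set β)) :=
  G ∪
  {L | ∃ J ⊆ I, J.ncard = 3 ∧ L = pairs J} ∪
  {L | ∃ i ∈ I, ∃ j ∈ I, i ≠ j ∧ ∃ x ∈ X,
      L = {({i, j} : Set β), {x, i}, {ξ i j x, j}}} ∪
  {L | ∃ i ∈ I, ∃ a ∈ X, ∃ b ∈ X, a ≠ b ∧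
      L = {({a, i} : Set β), {b, i}, μ i {a, b}}}

/-- The system of perspectives `m ⋈^μ_ξ 𝔅`, with point set `℘₂(X ∪ I)`. -/
def perspSys {β : Type*} (X I : Set β) (G : Set (Set (Set β)))
    (μ : β → Set β → Set β) (ξ : β → β → β → β) : IncStruct (Set β) :=
  ⟨pairs (X ∪ I), perspLines X I G μ ξ⟩

/-- `X_i = {q ∈ ℘₂(W) : i ∈ q}`. -/
def perspXi {β : Type*} (X I : Set β) (i : β) : Set (Set β) :=
  {q | q ∈ pairs (X ∪ I) ∧ i ∈ q}

/-- The line `L` meets `H` and is contained in `H` as soon as it has two points in `H`. -/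
def GoodLine {α : Type*} (H L : Set α) : Prop :=
  (∀ x ∈ L ∩ H, ∀ y ∈ L ∩ H, x ≠ y → L ⊆ H) ∧ (L ∩ H).Nonempty

lemma isHyperplane_iff {α : Type*} (M : IncStruct α) (H : Set α) :
    IsHyperplane M H ↔ H ⊆ M.pts ∧ H ≠ M.pts ∧ ∀ L ∈ M.lines, GoodLine H L := by
  unfold IsHyperplane IsSubspace GoodLine
  constructor
  · rintro ⟨⟨h1, h2⟩, h3, h4⟩
    exact ⟨h1, h3, fun L hL => ⟨h2 L hL, h4 L hL⟩⟩
  · rintro ⟨h1, h2, h3⟩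
    exact ⟨⟨h1, fun L hL => (h3 L hL).1⟩, h2, fun L hL => (h3 L hL).2⟩

/-- The iterated equivalence holds iff an odd number of the three memberships holds. -/
lemma good_triple {α : Type*} (H : Set α) {p q r : α} (hpq : p ≠ q) (hpr : p ≠ r) (hqr : q ≠ r) :
    GoodLine H {p, q, r} ↔ (p ∈ H ↔ (q ∈ H ↔ r ∈ H)) := by
  constructor
  · rintro ⟨h1, z, hz, hzH⟩
    have a1 : p ∈ H → q ∈ H → r ∈ H := fun hp hq =>
      h1 p ⟨by simp, hp⟩ q ⟨by simp, hq⟩ hpq (by simp)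
    have a2 : p ∈ H → r ∈ H → q ∈ H := fun hp hq =>
      h1 p ⟨by simp, hp⟩ r ⟨by simp, hq⟩ hpr (by simp)
    have a3 : q ∈ H → r ∈ H → p ∈ H := fun hp hq =>
      h1 q ⟨by simp, hp⟩ r ⟨by simp, hq⟩ hqr (by simp)
    have a4 : p ∈ H ∨ q ∈ H ∨ r ∈ H := by
      rcases hz with rfl | rfl | rfl <;> tauto
    tauto
  · intro h
    constructor
    · rintro x ⟨hx, hxH⟩ y ⟨hy, hyH⟩ hxy z hz
      simp only [Set.mem_insert_iff, Set.mem_singleton_iff] at hx hy hz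
      rcases hx with rfl | rfl | rfl <;> rcases hy with rfl | rfl | rfl <;>
        rcases hz with rfl | rfl | rfl <;> tauto
    · by_cases hp : p ∈ H
      · exact ⟨p, by simp, hp⟩
      by_cases hq : q ∈ H
      · exact ⟨q, by simp, hq⟩
      · exact ⟨r, by simp, by tauto⟩

lemma pair_mem_Hgt {α : Type*} {A W : Set α} {x y : α} (hx : x ∈ W) (hy : y ∈ W) (hxy : x ≠ y) :
    ({x, y} : Set α) ∈ Hgt A (W \ A) ↔ (x ∈ A ↔ y ∈ A) := by
  simp only [Hgt, pairs, Set.mem_union, Set.mem_ofPred_eq, Set.ncard_pair hxy, and_true,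
    Set.insert_subset_iff, Set.singleton_subset_iff, Set.mem_sdiff, hx, hy, true_and]
  tauto

/-- On pairs of points of `X`, membership in `H(A | W \ A)` does not depend on `W ⊇ X`. -/
lemma mem_Hgt_of_mem_pairs {α : Type*} {A X W : Set α} (hXW : X ⊆ W) {q : Set α}
    (hq : q ∈ pairs X) : q ∈ Hgt A (W \ A) ↔ (q ⊆ A ∨ q ⊆ X \ A) := by
  obtain ⟨hqX, hq2⟩ := hq
  simp only [Hgt, pairs, Set.mem_union, Set.mem_ofPred_eq, hq2, and_true, Set.subset_sdiff, hqX,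
    hqX.trans hXW, true_and]

lemma Hgt_subset_ne {α : Type*} {A X W : Set α} (hXW : X ⊆ W) (hA : A ⊆ X) (hAne : A.Nonempty)
    (hAX : A ≠ X) : Hgt A (W \ A) ⊆ pairs W ∧ Hgt A (W \ A) ≠ pairs W := by
  constructor
  · rintro q (⟨h1, h2⟩ | ⟨h1, h2⟩)
    · exact ⟨h1.trans (hA.trans hXW), h2⟩
    · exact ⟨h1.trans Set.sdiff_subset, h2⟩
  · obtain ⟨a, ha⟩ := hAne
    obtain ⟨b, hbX, hbA⟩ := Set.exists_of_ssubset (hA.ssubset_of_ne hAX)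
    have hab : a ≠ b := fun h => hbA (h ▸ ha)
    intro h
    have h1 : ({a, b} : Set α) ∈ pairs W :=
      ⟨by simp [Set.insert_subset_iff, hXW (hA ha), hXW hbX], Set.ncard_pair hab⟩
    rw [← h, pair_mem_Hgt (hXW (hA ha)) (hXW hbX) hab] at h1
    exact hbA (h1.1 ha)

lemma goodLine_congr {α : Type*} {H H' L : Set α} (h : ∀ q ∈ L, q ∈ H ↔ q ∈ H') :
    GoodLine H L ↔ GoodLine H' L := by
  have e : L ∩ H = L ∩ H' := by ext q; simp only [Set.mem_inter_iff]; have := h q; tauto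
  have e2 : L ⊆ H ↔ L ⊆ H' := forall₂_congr h
  unfold GoodLine
  rw [e, e2]

lemma goodLine_of_subset {α : Type*} {H L : Set α} (h : L ⊆ H) (hne : L.Nonempty) :
    GoodLine H L :=
  ⟨fun _ _ _ _ _ => h, hne.mono fun _ hx => ⟨hx, h hx⟩⟩

/-- In a system of perspectives whose only free complete `K_n`-graphs are
the `X_i`, for nonempty proper `A ⊆ X`: `H(A | W \ A)` is a hyperplane of `𝔐` iff
(i) `℘₂(A) ∪ ℘₂(X \ A)` is a hyperplane of `𝔅`, (ii) every `ξ_{i,j}` leaves `A`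
invariant, and (iii) every `μ_i` is compatible with the partition `{A, X \ A}`. -/
theorem stmt_12 {β : Type*} (m n : ℕ) (hm : 1 ≤ m) (hmn : m < n) (X I : Set β)
    (hdisj : X ∩ I = ∅) (hXfin : X.Finite) (hIfin : I.Finite)
    (hXcard : X.ncard = n - m + 1) (hIcard : I.ncard = m)
    (G : Set (Set (Set β))) (hB : IsBConfig (IncStruct.mk (pairs X) G) (n - m + 1))
    (μ : β → Set β → Set β) (hμ : ∀ i ∈ I, Set.BijOn (μ i) (pairs X) (pairs X))
    (ξ : β → β → β → β)
    (hξbij : ∀ i ∈ I, ∀ j ∈ I, Set.BijOn (ξ i j) X X)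
    (hξid : ∀ i ∈ I, ∀ x ∈ X, ξ i i x = x)
    (hξinv : ∀ i ∈ I, ∀ j ∈ I, ∀ x ∈ X, ξ j i (ξ i j x) = x)
    (honly : ∀ Y : Set (Set β),
      (FreelyContains (perspSys X I G μ ξ) Y ∧ Y.ncard = n) ↔ ∃ i ∈ I, Y = perspXi X I i)
    (A : Set β) (hA : A ⊆ X) (hAne : A.Nonempty) (hAX : A ≠ X) :
    IsHyperplane (perspSys X I G μ ξ) (Hgt A ((X ∪ I) \ A)) ↔
      (IsHyperplane (IncStruct.mk (pairs X) G) (Hgt A (X \ A)) ∧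
       (∀ i ∈ I, ∀ j ∈ I, ξ i j '' A = A) ∧
       (∀ i ∈ I, ∀ p ∈ pairs X, ∀ q ∈ pairs X, μ i p = q →
         ((p ⊆ A ∨ p ⊆ X \ A) ↔ (q ⊆ A ∨ q ⊆ X \ A)))) := by
  have hXW : X ⊆ X ∪ I := Set.subset_union_left
  have hIW : I ⊆ X ∪ I := Set.subset_union_right
  have hne : ∀ x ∈ X, ∀ i ∈ I, x ≠ i := by
    rintro x hx i hi rfl
    have : x ∈ X ∩ I := ⟨hx, hi⟩
    simp [hdisj] at this
  have hIA : ∀ i ∈ I, i ∉ A := fun i hi hiA => hne i (hA hiA) i hi rfl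
  have hGX : ∀ L ∈ G, L ⊆ pairs X := fun L hL => (hB.1.2.1 L hL).1
  obtain ⟨hs1, hn1⟩ := Hgt_subset_ne hXW hA hAne hAX
  obtain ⟨hs2, hn2⟩ := Hgt_subset_ne (le_refl X) hA hAne hAX
  set H := Hgt A ((X ∪ I) \ A) with hH
  have hG : ∀ L ∈ G, (GoodLine H L ↔ GoodLine (Hgt A (X \ A)) L) := fun L hL =>
    goodLine_congr fun q hq => by
      rw [mem_Hgt_of_mem_pairs hXW (hGX L hL hq), mem_Hgt_of_mem_pairs (le_refl X) (hGX L hL hq)]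
  have hxi : ∀ x ∈ X, ∀ i ∈ I, (({x, i} : Set β) ∈ H ↔ x ∉ A) := fun x hx i hi => by
    rw [pair_mem_Hgt (hXW hx) (hIW hi) (hne x hx i hi)]
    simp [hIA i hi]
  have hij : ∀ i ∈ I, ∀ j ∈ I, i ≠ j → (({i, j} : Set β) ∈ H) := fun i hi j hj h => by
    rw [pair_mem_Hgt (hIW hi) (hIW hj) h]
    simp [hIA i hi, hIA j hj]
  have hIlines : ∀ J ⊆ I, J.ncard = 3 → GoodLine H (pairs J) := by
    intro J hJ h3
    apply goodLine_of_subset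
    · rintro q ⟨h1, h2⟩
      exact Or.inr ⟨fun z hz => ⟨hIW (hJ (h1 hz)), hIA z (hJ (h1 hz))⟩, h2⟩
    · obtain ⟨a, b, c, hab, -, -, rfl⟩ := Set.ncard_eq_three.1 h3
      exact ⟨{a, b}, by simp [Set.insert_subset_iff], Set.ncard_pair hab⟩
  have hξlines : ∀ i ∈ I, ∀ j ∈ I, i ≠ j → ∀ x ∈ X,
      (GoodLine H {({i, j} : Set β), {x, i}, {ξ i j x, j}} ↔ (x ∈ A ↔ ξ i j x ∈ A)) := by
    intro i hi j hj h x hx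
    have hy := (hξbij i hi j hj).mapsTo hx
    rw [good_triple, hxi x hx i hi, hxi _ hy j hj]
    · rw [iff_true_left (hij i hi j hj h), not_iff_not]
    · intro e
      have : x ∈ ({i, j} : Set β) := e ▸ (by simp)
      rcases this with h' | h'
      exacts [hne x hx i hi h', hne x hx j hj h']
    · intro e
      have : ξ i j x ∈ ({i, j} : Set β) := e ▸ (by simp)
      rcases this with h' | h'
      exacts [hne _ hy i hi h', hne _ hy j hj h']
    · intro e
      have : j ∈ ({x, i} : Set β) := e ▸ (by simp)
      rcases this with h' | h'
      exacts [hne x hx j hj h'.symm, h h'.symm]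
  have hμlines : ∀ i ∈ I, ∀ a ∈ X, ∀ b ∈ X, a ≠ b →
      (GoodLine H {({a, i} : Set β), {b, i}, μ i {a, b}} ↔
        ((({a, b} : Set β) ⊆ A ∨ {a, b} ⊆ X \ A) ↔ (μ i {a, b} ⊆ A ∨ μ i {a, b} ⊆ X \ A))) := by
    intro i hi a ha b hb hab
    have hp : ({a, b} : Set β) ∈ pairs X :=
      ⟨by simp [Set.insert_subset_iff, ha, hb], Set.ncard_pair hab⟩
    have hq := (hμ i hi).mapsTo hp
    -- `{z, i}` is not a pair of points of `X`, so it differs from `μ i {a, b}`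
    have hz : ∀ z : β, ({z, i} : Set β) ≠ μ i {a, b} := fun z e => by
      have : i ∈ X := hq.1 (e ▸ (by simp))
      exact hne i this i hi rfl
    rw [good_triple _ _ (hz a) (hz b), hxi a ha i hi, hxi b hb i hi, mem_Hgt_of_mem_pairs hXW hq,
      ← mem_Hgt_of_mem_pairs hXW hp, pair_mem_Hgt (hXW ha) (hXW hb) hab]
    · tauto
    · intro e
      have : a ∈ ({b, i} : Set β) := e ▸ (by simp)
      rcases this with h' | h'
      exacts [hab h', hne a ha i hi h']
  rw [isHyperplane_iff, isHyperplane_iff]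
  constructor
  · rintro ⟨-, -, h⟩
    refine ⟨⟨hs2, hn2, fun L hL => (hG L hL).1 (h L (Or.inl (Or.inl (Or.inl hL))))⟩, ?_, ?_⟩
    · have key : ∀ i ∈ I, ∀ j ∈ I, ∀ x ∈ X, (x ∈ A ↔ ξ i j x ∈ A) := by
        intro i hi j hj x hx
        by_cases e : i = j
        · subst e
          rw [hξid i hi x hx]
        · exact (hξlines i hi j hj e x hx).1
            (h _ (Or.inl (Or.inr ⟨i, hi, j, hj, e, x, hx, rfl⟩)))
      intro i hi j hj
      ext y
      constructor
      · rintro ⟨x, hx, rfl⟩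
        exact (key i hi j hj x (hA hx)).1 hx
      · intro hy
        exact ⟨ξ j i y, (key j hj i hi y (hA hy)).1 hy, hξinv j hj i hi y (hA hy)⟩
    · rintro i hi p hp q - rfl
      obtain ⟨a, b, hab, rfl⟩ := Set.ncard_eq_two.1 hp.2
      have ha : a ∈ X := hp.1 (by simp)
      have hb : b ∈ X := hp.1 (by simp)
      exact (hμlines i hi a ha b hb hab).1 (h _ (Or.inr ⟨i, hi, a, ha, b, hb, hab, rfl⟩))
  · rintro ⟨⟨-, -, h1⟩, h2, h3⟩
    refine ⟨hs1, hn1, ?_⟩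
    rintro L (((hL | ⟨J, hJ, hJ3, rfl⟩) | ⟨i, hi, j, hj, e, x, hx, rfl⟩) |
      ⟨i, hi, a, ha, b, hb, hab, rfl⟩)
    · exact (hG L hL).2 (h1 L hL)
    · exact hIlines J hJ hJ3
    · refine (hξlines i hi j hj e x hx).2 ⟨fun hxA => h2 i hi j hj ▸ ⟨x, hxA, rfl⟩, fun hy => ?_⟩
      rw [← hξinv i hi j hj x hx]
      have : ξ j i (ξ i j x) ∈ ξ j i '' A := ⟨_, hy, rfl⟩
      rwa [h2 j hj i hi] at this
    · have hp : ({a, b} : Set β) ∈ pairs X :=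
        ⟨by simp [Set.insert_subset_iff, ha, hb], Set.ncard_pair hab⟩
      exact (hμlines i hi a ha b hb hab).2 (h3 i hi _ hp _ ((hμ i hi).mapsTo hp) rfl)
end

section
/- Let M(X, p, 𝒫) be a multi-veblen configuration with |X| = n ≥ 3 and W = X ∪ p, and assume that M(X, p, 𝒫) is not isomorphic to the generalized Desargues configuration G(W, 2), i.e., there is no bijection φ of ℘₂(W) onto itself mapping the line family of M(X, p, 𝒫) exactly onto {℘₂(Z) : Z ∈ ℘₃(W)}. Then every hyperplane of M(X, p, 𝒫) has the form H(A | (X \ A) ∪ p) for some nonempty A ⊆ X; and every hyperplane of M(X, p, 𝒫) whose complement is a complete graph freely contained in M(X, p, 𝒫) has the form H({i} | W \ {i}) for some i ∈ X. -/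
/-- The lines of the multi-veblen configuration `M(X, p, 𝒫)` with `p = {a, b}`. -/
def mvLines {β : Type*} (X : Set β) (a b : β) (P : Set (Set β)) :
    Set (Set (Set β)) :=
  {L | ∃ i ∈ X, L = {({a, b} : Set β), {a, i}, {b, i}}} ∪
  {L | ∃ i ∈ X, ∃ j ∈ X, i ≠ j ∧ ({i, j} : Set β) ∈ P ∧
      (L = {({a, i} : Set β), {a, j}, {i, j}} ∨
       L = {({b, i} : Set β), {b, j}, {i, j}})} ∪
  {L | ∃ i ∈ X, ∃ j ∈ X, i ≠ j ∧ ({i, j} : Set β) ∉ P ∧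
      (L = {({a, i} : Set β), {b, j}, {i, j}} ∨
       L = {({b, i} : Set β), {a, j}, {i, j}})} ∪
  {L | ∃ Z ⊆ X, Z.ncard = 3 ∧ L = pairs Z}

/-- The multi-veblen configuration `M(X, p, 𝒫)`, `p = {a, b}`, point set `℘₂(X ∪ p)`. -/
def mVeb {β : Type*} (X : Set β) (a b : β) (P : Set (Set β)) :
    IncStruct (Set β) :=
  ⟨pairs (X ∪ {a, b}), mvLines X a b P⟩

/-! ### Parity on lines, and pairs -/

/-- Modulo 2, the number of points of a line lying outside a hyperplane is zero. -/
lemma IsHyperplane.parity {α : Type*} {M : IncStruct α} {H : Set α} (hH : IsHyperplane M H)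
    {x y z : α} (hL : ({x, y, z} : Set α) ∈ M.lines) (hxy : x ≠ y) (hxz : x ≠ z) (hyz : y ≠ z) :
    z ∈ H ↔ (x ∈ H ↔ y ∈ H) := by
  obtain ⟨⟨-, hs⟩, -, hm⟩ := hH
  obtain ⟨t, ht, htH⟩ := hm _ hL
  have hs' := hs _ hL
  have h1 : x ∈ H → y ∈ H → z ∈ H := fun h h' =>
    hs' x ⟨by simp, h⟩ y ⟨by simp, h'⟩ hxy (by simp)
  have h2 : x ∈ H → z ∈ H → y ∈ H := fun h h' =>
    hs' x ⟨by simp, h⟩ z ⟨by simp, h'⟩ hxz (by simp)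
  have h3 : y ∈ H → z ∈ H → x ∈ H := fun h h' =>
    hs' y ⟨by simp, h⟩ z ⟨by simp, h'⟩ hyz (by simp)
  have h4 : x ∈ H ∨ y ∈ H ∨ z ∈ H := by
    rcases ht with rfl | rfl | rfl <;> tauto
  tauto

lemma mem_pairs_iff {α : Type*} {Z e : Set α} :
    e ∈ pairs Z ↔ ∃ x ∈ Z, ∃ y ∈ Z, x ≠ y ∧ e = {x, y} := by
  constructor
  · rintro ⟨h, h2⟩
    obtain ⟨x, y, hxy, rfl⟩ := Set.ncard_eq_two.1 h2
    exact ⟨x, h (by simp), y, h (by simp), hxy, rfl⟩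
  · rintro ⟨x, hx, y, hy, hxy, rfl⟩
    exact ⟨by rintro t (rfl | rfl) <;> assumption, Set.ncard_pair hxy⟩

lemma pair_mem_pairs {α : Type*} {Z : Set α} {x y : α} (hxy : x ≠ y) :
    ({x, y} : Set α) ∈ pairs Z ↔ x ∈ Z ∧ y ∈ Z := by
  simp [pairs, Set.ncard_pair hxy, Set.insert_subset_iff]

lemma pairs_triple {α : Type*} {x y z : α} (hxy : x ≠ y) (hxz : x ≠ z) (hyz : y ≠ z) :
    pairs ({x, y, z} : Set α) = {{x, y}, {x, z}, {y, z}} := by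
  ext e
  rw [mem_pairs_iff]
  constructor
  · rintro ⟨u, hu, v, hv, huv, rfl⟩
    simp only [Set.mem_insert_iff, Set.mem_singleton_iff, Set.pair_eq_pair_iff] at *
    grind
  · rintro (rfl | rfl | rfl)
    · exact ⟨x, by simp, y, by simp, hxy, rfl⟩
    · exact ⟨x, by simp, z, by simp, hxz, rfl⟩
    · exact ⟨y, by simp, z, by simp, hyz, rfl⟩

/-! ### Lines of the two configurations -/

section Lines

variable {β : Type*} {X : Set β} {a b : β} {P : Set (Set β)}

lemma line_p {i : β} (hi : i ∈ X) :
    ({{a, b}, {a, i}, {b, i}} : Set (Set β)) ∈ mvLines X a b P :=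
  Or.inl (Or.inl (Or.inl ⟨i, hi, rfl⟩))

lemma line_aa {i j : β} (hi : i ∈ X) (hj : j ∈ X) (hij : i ≠ j) (h : ({i, j} : Set β) ∈ P) :
    ({{a, i}, {a, j}, {i, j}} : Set (Set β)) ∈ mvLines X a b P :=
  Or.inl (Or.inl (Or.inr ⟨i, hi, j, hj, hij, h, Or.inl rfl⟩))

lemma line_bb {i j : β} (hi : i ∈ X) (hj : j ∈ X) (hij : i ≠ j) (h : ({i, j} : Set β) ∈ P) :
    ({{b, i}, {b, j}, {i, j}} : Set (Set β)) ∈ mvLines X a b P :=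
  Or.inl (Or.inl (Or.inr ⟨i, hi, j, hj, hij, h, Or.inr rfl⟩))

lemma line_ab {i j : β} (hi : i ∈ X) (hj : j ∈ X) (hij : i ≠ j) (h : ({i, j} : Set β) ∉ P) :
    ({{a, i}, {b, j}, {i, j}} : Set (Set β)) ∈ mvLines X a b P :=
  Or.inl (Or.inr ⟨i, hi, j, hj, hij, h, Or.inl rfl⟩)

lemma line_ba {i j : β} (hi : i ∈ X) (hj : j ∈ X) (hij : i ≠ j) (h : ({i, j} : Set β) ∉ P) :
    ({{b, i}, {a, j}, {i, j}} : Set (Set β)) ∈ mvLines X a b P :=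
  Or.inl (Or.inr ⟨i, hi, j, hj, hij, h, Or.inr rfl⟩)

lemma line_X {i j k : β} (hi : i ∈ X) (hj : j ∈ X) (hk : k ∈ X) (hij : i ≠ j) (hik : i ≠ k)
    (hjk : j ≠ k) : ({{i, j}, {i, k}, {j, k}} : Set (Set β)) ∈ mvLines X a b P := by
  refine Or.inr ⟨{i, j, k}, ?_, Set.ncard_eq_three.2 ⟨i, j, k, hij, hik, hjk, rfl⟩,
    (pairs_triple hij hik hjk).symm⟩
  rintro t (rfl | rfl | rfl) <;> assumption

/-- The two kinds of lines attached to a pair not in `P` differ only by exchanging `i` and `j`, so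
they make a single case. -/
lemma mvLines_cases {L : Set (Set β)} (hL : L ∈ mvLines X a b P) :
    (∃ i ∈ X, L = {{a, b}, {a, i}, {b, i}}) ∨
    (∃ i ∈ X, ∃ j ∈ X, i ≠ j ∧ ({i, j} : Set β) ∈ P ∧
      (L = {{a, i}, {a, j}, {i, j}} ∨ L = {{b, i}, {b, j}, {i, j}})) ∨
    (∃ i ∈ X, ∃ j ∈ X, i ≠ j ∧ ({i, j} : Set β) ∉ P ∧ L = {{a, i}, {b, j}, {i, j}}) ∨
    (∃ i ∈ X, ∃ j ∈ X, ∃ k ∈ X, i ≠ j ∧ i ≠ k ∧ j ≠ k ∧ L = {{i, j}, {i, k}, {j, k}}) := by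
  rcases hL with ((h | h) | ⟨i, hi, j, hj, hij, h, h' | h'⟩) | ⟨Z, hZ, h3, rfl⟩
  · exact Or.inl h
  · exact Or.inr (Or.inl h)
  · exact Or.inr (Or.inr (Or.inl ⟨i, hi, j, hj, hij, h, h'⟩))
  · refine Or.inr (Or.inr (Or.inl ⟨j, hj, i, hi, hij.symm, by rwa [Set.pair_comm], ?_⟩))
    rw [h', Set.insert_comm, Set.pair_comm i j]
  · obtain ⟨i, j, k, hij, hik, hjk, rfl⟩ := Set.ncard_eq_three.1 h3
    exact Or.inr (Or.inr (Or.inr ⟨i, hZ (by simp), j, hZ (by simp), k, hZ (by simp), hij, hik, hjk,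
      pairs_triple hij hik hjk⟩))

/-- A line of `G(W, 2)` is of one of three kinds, according to how its index set meets `{a, b}`. -/
lemma gdes_cases {L : Set (Set β)} (hL : L ∈ (Gdes (X ∪ {a, b})).lines) :
    (∃ i ∈ X, L = {{a, b}, {a, i}, {b, i}}) ∨
    (∃ i ∈ X, ∃ j ∈ X, i ≠ j ∧ (L = {{a, i}, {a, j}, {i, j}} ∨ L = {{b, i}, {b, j}, {i, j}})) ∨
    (∃ i ∈ X, ∃ j ∈ X, ∃ k ∈ X, i ≠ j ∧ i ≠ k ∧ j ≠ k ∧ L = {{i, j}, {i, k}, {j, k}}) := by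
  obtain ⟨Z, hZ, h3, rfl⟩ := hL
  -- The equalities `e1` to `e5` reorder the triangle, so that `a` and `b` can be moved to the front.
  obtain ⟨x, y, z, hxy, hxz, hyz, rfl⟩ := Set.ncard_eq_three.1 h3
  rw [pairs_triple hxy hxz hyz]
  have hx : x ∈ X ∪ {a, b} := hZ (by simp)
  have hy : y ∈ X ∪ {a, b} := hZ (by simp)
  have hz : z ∈ X ∪ {a, b} := hZ (by simp)
  have e1 : ({{x, y}, {x, z}, {y, z}} : Set (Set β)) = {{y, x}, {y, z}, {x, z}} := by
    rw [Set.pair_comm x y]; ext; simp only [Set.mem_insert_iff, Set.mem_singleton_iff]; tauto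
  have e2 : ({{x, y}, {x, z}, {y, z}} : Set (Set β)) = {{z, x}, {z, y}, {x, y}} := by
    rw [Set.pair_comm z x, Set.pair_comm z y]; ext
    simp only [Set.mem_insert_iff, Set.mem_singleton_iff]; tauto
  have e3 : ({{x, y}, {x, z}, {y, z}} : Set (Set β)) = {{x, z}, {x, y}, {z, y}} := by
    rw [Set.pair_comm z y, Set.insert_comm]
  have e4 : ({{x, y}, {x, z}, {y, z}} : Set (Set β)) = {{y, z}, {y, x}, {z, x}} := by
    rw [Set.pair_comm z x, Set.pair_comm y x]; ext
    simp only [Set.mem_insert_iff, Set.mem_singleton_iff]; tauto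
  have e5 : ({{x, y}, {x, z}, {y, z}} : Set (Set β)) = {{z, y}, {z, x}, {y, x}} := by
    rw [Set.pair_comm z x, Set.pair_comm y x, Set.pair_comm z y]; ext
    simp only [Set.mem_insert_iff, Set.mem_singleton_iff]; tauto
  rcases hx with hx | rfl | rfl <;> rcases hy with hy | rfl | rfl <;>
    rcases hz with hz | rfl | rfl <;> grind

end Lines

/-! ### Split graphs give generalized Desargues configurations -/

/-- If `P` is the disjoint union of the complete graphs on `B` and on `X \ B`, then the multi-veblen
configuration is a generalized Desargues configuration: exchange `{a, i}` and `{b, i}` for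
`i ∈ B`. -/
lemma isIso_of_split {β : Type*} {X : Set β} {a b : β} (hab : a ≠ b) (ha : a ∉ X) (hb : b ∉ X)
    {P : Set (Set β)} (B : Set β) (hB : B ⊆ X)
    (hP : ∀ i ∈ X, ∀ j ∈ X, i ≠ j → (({i, j} : Set β) ∈ P ↔ (i ∈ B ↔ j ∈ B))) :
    IsIso (mVeb X a b P) (Gdes (X ∪ {a, b})) := by
  classical
  let φ : Set β → Set β := fun e => if (e ∩ B).Nonempty then Equiv.swap a b '' e else e
  have haB : a ∉ B := fun h => ha (hB h)
  have hbB : b ∉ B := fun h => hb (hB h)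
  have hne : ∀ x y, (({x, y} : Set β) ∩ B).Nonempty ↔ x ∈ B ∨ y ∈ B := by
    intro x y
    constructor
    · rintro ⟨t, rfl | rfl, h⟩ <;> tauto
    · rintro (h | h)
      exacts [⟨x, by simp, h⟩, ⟨y, by simp, h⟩]
  have hφ : ∀ x y, φ {x, y} =
      if x ∈ B ∨ y ∈ B then {Equiv.swap a b x, Equiv.swap a b y} else {x, y} := by
    intro x y
    simp only [φ, hne, Set.image_pair]
  have hX : ∀ i ∈ X, Equiv.swap a b i = i := fun i hi =>
    Equiv.swap_apply_of_ne_of_ne (by rintro rfl; exact ha hi) (by rintro rfl; exact hb hi)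
  have φp : φ {a, b} = {a, b} := by rw [hφ]; simp [haB, hbB]
  have φa : ∀ i ∈ X, φ {a, i} = if i ∈ B then {b, i} else {a, i} := by
    intro i hi; rw [hφ]; simp [haB, hX i hi]
  have φb : ∀ i ∈ X, φ {b, i} = if i ∈ B then {a, i} else {b, i} := by
    intro i hi; rw [hφ]; simp [hbB, hX i hi]
  have φX : ∀ i ∈ X, ∀ j ∈ X, φ {i, j} = {i, j} := by
    intro i hi j hj; rw [hφ]; simp [hX i hi, hX j hj]
  have hW : ∀ x, x ∈ X ∪ {a, b} → Equiv.swap a b x ∈ X ∪ {a, b} := by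
    rintro x (hx | rfl | rfl)
    · rw [hX x hx]; exact Or.inl hx
    · simp
    · simp
  have hmaps : Set.MapsTo φ (pairs (X ∪ {a, b})) (pairs (X ∪ {a, b})) := by
    intro e he
    obtain ⟨x, hx, y, hy, hxy, rfl⟩ := mem_pairs_iff.1 he
    rw [hφ]
    split_ifs
    · exact mem_pairs_iff.2 ⟨_, hW x hx, _, hW y hy,
        fun h => hxy ((Equiv.swap a b).injective h), rfl⟩
    · exact he
  have hinvB : ∀ x, Equiv.swap a b x ∈ B ↔ x ∈ B := by
    intro x
    rcases eq_or_ne x a with rfl | h1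
    · simp [haB, hbB]
    rcases eq_or_ne x b with rfl | h2
    · simp [haB, hbB]
    rw [Equiv.swap_apply_of_ne_of_ne h1 h2]
  have hinv : ∀ e ∈ pairs (X ∪ {a, b}), φ (φ e) = e := by
    intro e he
    obtain ⟨x, hx, y, hy, hxy, rfl⟩ := mem_pairs_iff.1 he
    by_cases h : x ∈ B ∨ y ∈ B
    · rw [hφ, if_pos h, hφ, hinvB, hinvB, if_pos h]; simp
    · rw [hφ, if_neg h, hφ, if_neg h]
  have h3 : ∀ x y z : Set β, φ '' {x, y, z} = {φ x, φ y, φ z} := by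
    intro x y z; rw [Set.image_insert_eq, Set.image_pair]
  have hG : ∀ x ∈ X ∪ {a, b}, ∀ y ∈ X ∪ {a, b}, ∀ z ∈ X ∪ {a, b}, x ≠ y → x ≠ z → y ≠ z →
      ({{x, y}, {x, z}, {y, z}} : Set (Set β)) ∈ (Gdes (X ∪ {a, b})).lines := by
    intro x hx y hy z hz hxy hxz hyz
    refine ⟨{x, y, z}, ?_, Set.ncard_eq_three.2 ⟨x, y, z, hxy, hxz, hyz, rfl⟩,
      (pairs_triple hxy hxz hyz).symm⟩
    rintro t (rfl | rfl | rfl) <;> assumption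
  have iX : ∀ i ∈ X, i ∈ X ∪ {a, b} := fun i hi => Or.inl hi
  have ia : a ∈ X ∪ {a, b} := by simp
  have ib : b ∈ X ∪ {a, b} := by simp
  have nea : ∀ i ∈ X, a ≠ i := by rintro i hi rfl; exact ha hi
  have neb : ∀ i ∈ X, b ≠ i := by rintro i hi rfl; exact hb hi
  have Gp : ∀ i ∈ X, ({{a, b}, {a, i}, {b, i}} : Set (Set β)) ∈ (Gdes (X ∪ {a, b})).lines :=
    fun i hi => hG a ia b ib i (iX i hi) hab (nea i hi) (neb i hi)
  have Ga : ∀ i ∈ X, ∀ j ∈ X, i ≠ j →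
      ({{a, i}, {a, j}, {i, j}} : Set (Set β)) ∈ (Gdes (X ∪ {a, b})).lines :=
    fun i hi j hj hij => hG a ia i (iX i hi) j (iX j hj) (nea i hi) (nea j hj) hij
  have Gb : ∀ i ∈ X, ∀ j ∈ X, i ≠ j →
      ({{b, i}, {b, j}, {i, j}} : Set (Set β)) ∈ (Gdes (X ∪ {a, b})).lines :=
    fun i hi j hj hij => hG b ib i (iX i hi) j (iX j hj) (neb i hi) (neb j hj) hij
  have fwd : ∀ L ∈ mvLines X a b P, φ '' L ∈ (Gdes (X ∪ {a, b})).lines := by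
    intro L hL
    rcases mvLines_cases hL with ⟨i, hi, rfl⟩ | ⟨i, hi, j, hj, hij, h, rfl | rfl⟩ |
      ⟨i, hi, j, hj, hij, h, rfl⟩ | ⟨i, hi, j, hj, k, hk, hij, hik, hjk, rfl⟩
    · rw [h3, φp, φa i hi, φb i hi]
      split_ifs
      · rw [Set.pair_comm ({b, i} : Set β)]; exact Gp i hi
      · exact Gp i hi
    · rw [hP i hi j hj hij] at h
      rw [h3, φX i hi j hj, φa i hi, φa j hj]
      by_cases h' : j ∈ B
      · rw [if_pos (h.2 h'), if_pos h']; exact Gb i hi j hj hij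
      · rw [if_neg (fun t => h' (h.1 t)), if_neg h']; exact Ga i hi j hj hij
    · rw [hP i hi j hj hij] at h
      rw [h3, φX i hi j hj, φb i hi, φb j hj]
      by_cases h' : j ∈ B
      · rw [if_pos (h.2 h'), if_pos h']; exact Ga i hi j hj hij
      · rw [if_neg (fun t => h' (h.1 t)), if_neg h']; exact Gb i hi j hj hij
    · rw [hP i hi j hj hij] at h
      rw [h3, φX i hi j hj, φa i hi, φb j hj]
      by_cases h' : j ∈ B
      · rw [if_neg (by tauto), if_pos h']; exact Ga i hi j hj hij
      · rw [if_pos (by tauto), if_neg h']; exact Gb i hi j hj hij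
    · rw [h3, φX i hi j hj, φX i hi k hk, φX j hj k hk]
      exact hG i (iX i hi) j (iX j hj) k (iX k hk) hij hik hjk
  have bwd : ∀ L ∈ (Gdes (X ∪ {a, b})).lines, φ '' L ∈ mvLines X a b P := by
    intro L hL
    rcases gdes_cases hL with ⟨i, hi, rfl⟩ | ⟨i, hi, j, hj, hij, rfl | rfl⟩ |
      ⟨i, hi, j, hj, k, hk, hij, hik, hjk, rfl⟩
    · rw [h3, φp, φa i hi, φb i hi]
      split_ifs
      · rw [Set.pair_comm ({b, i} : Set β)]; exact line_p hi
      · exact line_p hi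
    · have h := hP i hi j hj hij
      rw [h3, φX i hi j hj, φa i hi, φa j hj]
      split_ifs
      · exact line_bb hi hj hij (by tauto)
      · exact line_ba hi hj hij (by tauto)
      · exact line_ab hi hj hij (by tauto)
      · exact line_aa hi hj hij (by tauto)
    · have h := hP i hi j hj hij
      rw [h3, φX i hi j hj, φb i hi, φb j hj]
      split_ifs
      · exact line_aa hi hj hij (by tauto)
      · exact line_ab hi hj hij (by tauto)
      · exact line_ba hi hj hij (by tauto)
      · exact line_bb hi hj hij (by tauto)
    · rw [h3, φX i hi j hj, φX i hi k hk, φX j hj k hk]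
      exact line_X hi hj hk hij hik hjk
  refine ⟨φ, ⟨hmaps, fun x hx y hy hxy => ?_, fun x hx => ⟨φ x, hmaps hx, hinv x hx⟩⟩, ?_⟩
  · rw [← hinv x hx, ← hinv y hy, hxy]
  · ext L
    constructor
    · rintro ⟨L', hL', rfl⟩
      exact fwd L' hL'
    · intro hL
      refine ⟨φ '' L, bwd L hL, ?_⟩
      have hLW : ∀ e ∈ L, e ∈ pairs (X ∪ {a, b}) := by
        obtain ⟨Z, hZ, -, rfl⟩ := hL
        exact fun e he => ⟨he.1.trans hZ, he.2⟩
      change φ '' (φ '' L) = L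
      rw [Set.image_image]
      exact (Set.image_congr fun e he => hinv e (hLW e he)).trans (Set.image_id' L)

/-! ### Hyperplanes of multi-veblen configurations -/

section Hyperplanes

variable {β : Type*} {X : Set β} {a b : β} {P : Set (Set β)} {H : Set (Set β)}

lemma parity_p (hab : a ≠ b) (ha : a ∉ X) (hb : b ∉ X) (hH : IsHyperplane (mVeb X a b P) H)
    {i : β} (hi : i ∈ X) : ({b, i} : Set β) ∈ H ↔ (({a, b} : Set β) ∈ H ↔ ({a, i} : Set β) ∈ H) := by
  refine hH.parity (line_p hi) ?_ ?_ ?_ <;>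
    · rw [Ne, Set.pair_eq_pair_iff]; grind

lemma parity_aa (ha : a ∉ X) (hH : IsHyperplane (mVeb X a b P) H)
    {i j : β} (hi : i ∈ X) (hj : j ∈ X) (hij : i ≠ j) (h : ({i, j} : Set β) ∈ P) :
    ({i, j} : Set β) ∈ H ↔ (({a, i} : Set β) ∈ H ↔ ({a, j} : Set β) ∈ H) := by
  refine hH.parity (line_aa hi hj hij h) ?_ ?_ ?_ <;>
    · rw [Ne, Set.pair_eq_pair_iff]; grind

lemma parity_ab (hab : a ≠ b) (ha : a ∉ X) (hb : b ∉ X) (hH : IsHyperplane (mVeb X a b P) H)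
    {i j : β} (hi : i ∈ X) (hj : j ∈ X) (hij : i ≠ j) (h : ({i, j} : Set β) ∉ P) :
    ({i, j} : Set β) ∈ H ↔ (({a, i} : Set β) ∈ H ↔ ({b, j} : Set β) ∈ H) := by
  refine hH.parity (line_ab hi hj hij h) ?_ ?_ ?_ <;>
    · rw [Ne, Set.pair_eq_pair_iff]; grind

lemma parity_X (hH : IsHyperplane (mVeb X a b P) H) {i j k : β} (hi : i ∈ X) (hj : j ∈ X)
    (hk : k ∈ X) (hij : i ≠ j) (hik : i ≠ k) (hjk : j ≠ k) :
    ({j, k} : Set β) ∈ H ↔ (({i, j} : Set β) ∈ H ↔ ({i, k} : Set β) ∈ H) := by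
  refine hH.parity (line_X hi hj hk hij hik hjk) ?_ ?_ ?_ <;>
    · rw [Ne, Set.pair_eq_pair_iff]; grind

/-- A hyperplane avoiding `p` forces the configuration to be a generalized Desargues one. -/
lemma isIso_of_notMem (hab : a ≠ b) (ha : a ∉ X) (hb : b ∉ X) (hne : X.Nonempty)
    (hH : IsHyperplane (mVeb X a b P) H) (hp : ({a, b} : Set β) ∉ H) :
    IsIso (mVeb X a b P) (Gdes (X ∪ {a, b})) := by
  obtain ⟨o, ho⟩ := hne
  -- Since `p ∉ H`, the values at `{a, j}` and `{b, j}` differ, so they tell the two kinds of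
  -- lines through `{i, j}` apart.
  have key : ∀ i ∈ X, ∀ j ∈ X, i ≠ j → (({i, j} : Set β) ∈ P ↔
      (({i, j} : Set β) ∈ H ↔ (({a, i} : Set β) ∈ H ↔ ({a, j} : Set β) ∈ H))) := by
    intro i hi j hj hij
    have h1 := parity_p hab ha hb hH hj
    by_cases h : ({i, j} : Set β) ∈ P
    · have h2 := parity_aa ha hH hi hj hij h
      tauto
    · have h2 := parity_ab hab ha hb hH hi hj hij h
      tauto
  refine isIso_of_split hab ha hb {i | i ∈ X ∧ i ≠ o ∧ ({o, i} : Set β) ∉ P} (fun i hi => hi.1) ?_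
  intro i hi j hj hij
  simp only [Set.mem_ofPred_eq]
  rcases eq_or_ne i o with rfl | hio
  · have : j ≠ i := hij.symm
    tauto
  rcases eq_or_ne j o with rfl | hjo
  · rw [Set.pair_comm]
    tauto
  have k1 := key i hi j hj hij
  have k2 := key o ho i hi hio.symm
  have k3 := key o ho j hj hjo.symm
  have k4 := parity_X hH ho hi hj hio.symm hjo.symm hij
  simp only [hi, hj, hio, hjo, ne_eq, not_false_eq_true, true_and, k1, k2, k3, k4]
  by_cases h1 : ({a, i} : Set β) ∈ H <;> by_cases h2 : ({a, j} : Set β) ∈ H <;>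
    by_cases h3 : ({o, i} : Set β) ∈ H <;> by_cases h4 : ({o, j} : Set β) ∈ H <;>
    simp [h1, h2, h3, h4]

/-- If `p ∈ H`, then `{i, j} ∈ H` exactly when `{a, i}` and `{a, j}` are both in `H` or both outside
it, independently of `P`. -/
lemma hyperplane_of_mem (hab : a ≠ b) (ha : a ∉ X) (hb : b ∉ X)
    (hH : IsHyperplane (mVeb X a b P) H) (hp : ({a, b} : Set β) ∈ H) :
    ∃ A : Set β, A ⊆ X ∧ A.Nonempty ∧ H = Hgt A ((X \ A) ∪ {a, b}) := by
  have kb : ∀ i ∈ X, (({b, i} : Set β) ∈ H ↔ ({a, i} : Set β) ∈ H) := by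
    intro i hi
    have := parity_p hab ha hb hH hi
    tauto
  have kX : ∀ i ∈ X, ∀ j ∈ X, i ≠ j →
      (({i, j} : Set β) ∈ H ↔ (({a, i} : Set β) ∈ H ↔ ({a, j} : Set β) ∈ H)) := by
    intro i hi j hj hij
    have h1 := kb j hj
    by_cases h : ({i, j} : Set β) ∈ P
    · exact parity_aa ha hH hi hj hij h
    · have h2 := parity_ab hab ha hb hH hi hj hij h
      tauto
  have hEq : H = Hgt {i | i ∈ X ∧ ({a, i} : Set β) ∉ H}
      ((X \ {i | i ∈ X ∧ ({a, i} : Set β) ∉ H}) ∪ {a, b}) := by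
    have hmem : ∀ e ∈ pairs (X ∪ {a, b}), e ∈ H ↔ e ∈ Hgt {i | i ∈ X ∧ ({a, i} : Set β) ∉ H}
      ((X \ {i | i ∈ X ∧ ({a, i} : Set β) ∉ H}) ∪ {a, b}) := by
      intro e he
      obtain ⟨x, hx, y, hy, hxy, rfl⟩ := mem_pairs_iff.1 he
      rw [Hgt, Set.mem_union, pair_mem_pairs hxy, pair_mem_pairs hxy]
      have c1 := kX x
      have c2 := kb x
      have c3 := kb y
      have c4 : ({x, y} : Set β) = {y, x} := Set.pair_comm x y
      simp only [Set.mem_union, Set.mem_insert_iff, Set.mem_singleton_iff, Set.mem_sdiff,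
        Set.mem_ofPred_eq] at hx hy ⊢
      rcases hx with hx | rfl | rfl <;> rcases hy with hy | rfl | rfl <;> grind
    ext e
    constructor
    · exact fun he => (hmem e (hH.1.1 he)).1 he
    · intro he
      refine (hmem e ?_).2 he
      rcases he with ⟨h1, h2⟩ | ⟨h1, h2⟩
      · exact ⟨fun x hx => Or.inl (h1 hx).1, h2⟩
      · exact ⟨fun x hx => (h1 hx).imp (fun h => h.1) id, h2⟩
  refine ⟨_, fun i hi => hi.1, ?_, hEq⟩
  rw [Set.nonempty_iff_ne_empty]
  intro h0
  rw [h0] at hEq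
  apply hH.2.1
  rw [hEq]
  ext e
  simp only [Hgt, mVeb, Set.sdiff_empty, Set.mem_union, or_iff_right_iff_imp]
  rintro ⟨h1, h2⟩
  exact ⟨h1.trans (Set.empty_subset _), h2⟩

end Hyperplanes

/-- For `i ≠ j` in `X`, the point `{a, i}` is not collinear with both `{a, j}` and `{b, j}`. -/
lemma not_both_collinear {β : Type*} {X : Set β} {a b : β} (hab : a ≠ b) (ha : a ∉ X) (hb : b ∉ X)
    {P : Set (Set β)} {i j : β} (hi : i ∈ X) (hj : j ∈ X) (hij : i ≠ j)
    (h1 : ∃ L ∈ mvLines X a b P, ({a, i} : Set β) ∈ L ∧ ({a, j} : Set β) ∈ L)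
    (h2 : ∃ L ∈ mvLines X a b P, ({a, i} : Set β) ∈ L ∧ ({b, j} : Set β) ∈ L) : False := by
  have k1 : ({i, j} : Set β) ∈ P := by
    obtain ⟨L, hL, u, v⟩ := h1
    rcases mvLines_cases hL with ⟨s, hs, rfl⟩ | ⟨s, hs, t, ht, hst, h, rfl | rfl⟩ |
      ⟨s, hs, t, ht, hst, h, rfl⟩ | ⟨s, hs, t, ht, r, hr, hst, hsr, htr, rfl⟩ <;>
    simp only [Set.mem_insert_iff, Set.mem_singleton_iff, Set.pair_eq_pair_iff] at u v <;>
    grind [Set.pair_comm]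
  have k2 : ({i, j} : Set β) ∉ P := by
    obtain ⟨L, hL, u, v⟩ := h2
    rcases mvLines_cases hL with ⟨s, hs, rfl⟩ | ⟨s, hs, t, ht, hst, h, rfl | rfl⟩ |
      ⟨s, hs, t, ht, hst, h, rfl⟩ | ⟨s, hs, t, ht, r, hr, hst, hsr, htr, rfl⟩ <;>
    simp only [Set.mem_insert_iff, Set.mem_singleton_iff, Set.pair_eq_pair_iff] at u v <;>
    grind [Set.pair_comm]
  exact k2 k1

/-- If `M(X, p, 𝒫)` (`|X| = n ≥ 3`, `W = X ∪ p`) is not isomorphic to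
`G(W, 2)`, then every hyperplane has the form `H(A | (X \ A) ∪ p)` for some nonempty
`A ⊆ X`, and every hyperplane whose complement is a freely contained complete graph
has the form `H({i} | W \ {i})` for some `i ∈ X`. -/
theorem stmt_18 {β : Type*} (n : ℕ) (hn : 3 ≤ n) (X : Set β)
    (hXfin : X.Finite) (hXcard : X.ncard = n)
    (a b : β) (hab : a ≠ b) (ha : a ∉ X) (hb : b ∉ X)
    (P : Set (Set β)) (hP : P ⊆ pairs X)
    (hnotdes : ¬ IsIso (mVeb X a b P) (Gdes (X ∪ {a, b}))) :
    (∀ H : Set (Set β), IsHyperplane (mVeb X a b P) H →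
      ∃ A : Set β, A ⊆ X ∧ A.Nonempty ∧ H = Hgt A ((X \ A) ∪ {a, b})) ∧
    (∀ H : Set (Set β), IsHyperplane (mVeb X a b P) H →
      FreelyContains (mVeb X a b P) ((mVeb X a b P).pts \ H) →
      ∃ i ∈ X, H = Hgt {i} ((X ∪ {a, b}) \ {i})) := by
  have hne : X.Nonempty := by
    rw [Set.nonempty_iff_ne_empty]
    rintro rfl
    simp at hXcard
    omega
  have main : ∀ H : Set (Set β), IsHyperplane (mVeb X a b P) H →
      ∃ A : Set β, A ⊆ X ∧ A.Nonempty ∧ H = Hgt A ((X \ A) ∪ {a, b}) := by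
    intro H hH
    by_cases hp : ({a, b} : Set β) ∈ H
    · exact hyperplane_of_mem hab ha hb hH hp
    · exact absurd (isIso_of_notMem hab ha hb hne hH hp) hnotdes
  refine ⟨main, fun H hH hfree => ?_⟩
  obtain ⟨A, hAX, ⟨i, hiA⟩, rfl⟩ := main H hH
  have hiX := hAX hiA
  have hA : A = {i} := by
    refine Set.eq_singleton_iff_unique_mem.2 ⟨hiA, fun j hjA => ?_⟩
    by_contra hji
    have hjX := hAX hjA
    have hcompl : ∀ q ∈ ({a, b} : Set β), ∀ k ∈ A,
        ({q, k} : Set β) ∈ (mVeb X a b P).pts \ Hgt A ((X \ A) ∪ {a, b}) := by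
      intro q hq k hk
      have hqX : q ∉ X := by rcases hq with rfl | rfl <;> assumption
      have hkX := hAX hk
      have hqk : q ≠ k := by rintro rfl; exact hqX hkX
      have hkab : k ∉ ({a, b} : Set β) := by rintro (rfl | rfl) <;> contradiction
      refine ⟨(pair_mem_pairs hqk).2 ⟨Or.inr hq, Or.inl hkX⟩, ?_⟩
      rintro (h | h)
      · exact hqX (hAX ((pair_mem_pairs hqk).1 h).1)
      · rcases ((pair_mem_pairs hqk).1 h).2 with h' | h'
        · exact h'.2 hk
        · exact hkab h'
    have hai := hcompl a (by simp) i hiA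
    refine not_both_collinear hab ha hb hiX hjX (Ne.symm hji)
      (hfree.2.1 _ hai _ (hcompl a (by simp) j hjA) ?_)
      (hfree.2.1 _ hai _ (hcompl b (by simp) j hjA) ?_) <;>
    · rw [Ne, Set.pair_eq_pair_iff]; grind
  refine ⟨i, hiX, ?_⟩
  subst hA
  congr 1
  ext x
  simp only [Set.mem_union, Set.mem_sdiff, Set.mem_singleton_iff, Set.mem_insert_iff]
  have : i ≠ a := by rintro rfl; exact ha hiX
  have : i ≠ b := by rintro rfl; exact hb hiX
  grind
end
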